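/- Let X be a finite set, λ ∈ (0,1), and let F₁ ⊊ F₂ ⊆ X and G₁ ⊊ G₂ ⊆ X be sets such that F₁ ∩ G₁ ≠ ∅, F₂ ∩ G₁ ⊄ F₁, F₁ ∩ G₂ ⊄ G₁, and F₂ ∩ G₂ ⊄ F₁ ∪ G₁. Define possibility distributions π_F(x) = 1 if x ∈ F₁, 1−λ if x ∈ F₂∖F₁, 0 otherwise, and π_G(x) = 1 if x ∈ G₁, λ if x ∈ G₂∖G₁, 0 otherwise. Then 𝒫 = 𝒫_{π_F} ∩ 𝒫_{π_G} is nonempty and its lower probability P̲ satisfies P̲(F₁) = λ, P̲(G₁) = 1 − λ, P̲(F₁ ∩ G₁) = 0 and P̲(F₁ ∪ G₁) ≤ max(λ, 1−λ) < 1; consequently P̲(F₁ ∪ G₁) + P̲(F₁ ∩ G₁) < P̲(F₁) + P̲(G₁), so P̲ is not 2-monotone. -/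

import Mathlib

open Finset

attribute [local instance] Classical.propDecidable

variable {X : Type*}

/-- A probability distribution on a finite set `X`. -/
def IsProbDist [Fintype X] (p : X → ℝ) : Prop :=
  (∀ x, 0 ≤ p x ∧ p x ≤ 1) ∧ ∑ x, p x = 1

/-- A cloud on `X`: a pair `(δ, π)` of `[0,1]`-valued maps with `δ ≤ π`,
`π` reaching `1` and `δ` reaching `0`. -/
def IsCloud (δ π : X → ℝ) : Prop :=
  (∀ x, 0 ≤ δ x) ∧ (∀ x, π x ≤ 1) ∧ (∀ x, δ x ≤ π x) ∧ (∃ x, π x = 1) ∧ (∃ y, δ y = 0)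

/-- The credal set of a cloud `(δ, π)`. -/
def credalCloud [Fintype X] (δ π : X → ℝ) : Set (X → ℝ) :=
  {p | IsProbDist p ∧ ∀ α : ℝ, 0 ≤ α → α ≤ 1 →
    (∑ x ∈ univ.filter (fun x => α ≤ δ x), p x) ≤ 1 - α ∧
    1 - α ≤ ∑ x ∈ univ.filter (fun x => α < π x), p x}

/-- A possibility distribution on `X`. -/
def IsPossDist (π : X → ℝ) : Prop :=
  (∀ x, 0 ≤ π x ∧ π x ≤ 1) ∧ ∃ x, π x = 1

/-- The credal set of a possibility distribution. -/
def credalPoss [Fintype X] (π : X → ℝ) : Set (X → ℝ) :=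
  {p | IsProbDist p ∧ ∀ α : ℝ, 0 ≤ α → α ≤ 1 →
    1 - α ≤ ∑ x ∈ univ.filter (fun x => α < π x), p x}


/-- The lower probability of a set of probability distributions on an event. -/
noncomputable def lowProb [Fintype X] (Ps : Set (X → ℝ)) (A : Finset X) : ℝ :=
  sInf ((fun p => ∑ x ∈ A, p x) '' Ps)

/-!
A nested pair `A ⊆ B` whose outer level is `1 - m` encodes exactly the two constraints `P(A) ≥ m`
and `P(B) = 1`. Two such pairs, with parameters `l` and `m`, thus give `P(F₁) ≥ l`, `P(G₁) ≥ m` and,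
as in Fréchet's inequalities, `P(F₁ ∩ G₁) ≥ max 0 (l + m - 1)` and `P(F₁ ∪ G₁) ≥ max l m`. The
position of the four sets leaves room for two or three point masses attaining each of these bounds,
though not for a single distribution attaining all of them: since `max 0 (l + m - 1) < min l m`, the
four minima violate 2-monotonicity.
-/

lemma isProbDist_iff_mem_stdSimplex [Fintype X] {p : X → ℝ} :
    IsProbDist p ↔ p ∈ stdSimplex ℝ X :=
  ⟨fun hp => ⟨fun x => (hp.1 x).1, hp.2⟩, fun hp => ⟨mem_Icc_of_mem_stdSimplex hp, hp.2⟩⟩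

lemma IsProbDist.sum_nonneg [Fintype X] {p : X → ℝ} (hp : IsProbDist p) (A : Finset X) :
    0 ≤ ∑ x ∈ A, p x :=
  Finset.sum_nonneg fun x _ => (hp.1 x).1

lemma IsProbDist.sum_mono [Fintype X] {p : X → ℝ} (hp : IsProbDist p) {A B : Finset X}
    (hAB : A ⊆ B) : ∑ x ∈ A, p x ≤ ∑ x ∈ B, p x :=
  sum_le_sum_of_subset_of_nonneg hAB fun x _ _ => (hp.1 x).1

lemma IsProbDist.sum_le_one [Fintype X] {p : X → ℝ} (hp : IsProbDist p) (A : Finset X) :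
    ∑ x ∈ A, p x ≤ 1 :=
  (hp.sum_mono (subset_univ A)).trans_eq hp.2

lemma IsProbDist.sum_add_sum_sub_one_le_sum_inter [Fintype X] {p : X → ℝ} (hp : IsProbDist p)
    (A B : Finset X) : ∑ x ∈ A, p x + ∑ x ∈ B, p x - 1 ≤ ∑ x ∈ A ∩ B, p x := by
  linarith [hp.sum_le_one (A ∪ B), sum_union_inter (s₁ := A) (s₂ := B) (f := p)]

/-- The discrete distribution placing mass `w i` at the point `u i`; masses at coinciding points
add up. -/
noncomputable def pointMasses {ι : Type*} [Fintype ι] (u : ι → X) (w : ι → ℝ) : X → ℝ :=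
  ∑ i, Pi.single (u i) (w i)

lemma sum_pointMasses {ι : Type*} [Fintype ι] (u : ι → X) (w : ι → ℝ) (A : Finset X) :
    ∑ x ∈ A, pointMasses u w x = ∑ i, if u i ∈ A then w i else 0 := by
  simp only [pointMasses, Finset.sum_apply]
  rw [sum_comm]
  simp only [sum_pi_single']

lemma isProbDist_pointMasses [Fintype X] {ι : Type*} [Fintype ι] (u : ι → X)
    {w : ι → ℝ} (hw : w ∈ stdSimplex ℝ ι) : IsProbDist (pointMasses u w) := by
  refine isProbDist_iff_mem_stdSimplex.mpr ⟨?_, ?_⟩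
  · exact (Finset.sum_nonneg fun i _ => Pi.single_nonneg.mpr (hw.1 i) : 0 ≤ pointMasses u w)
  · simpa only [sum_pointMasses, mem_univ, if_true] using hw.2

lemma lowProb_eq_sum_of_forall_le [Fintype X] {Ps : Set (X → ℝ)} {A : Finset X} {p : X → ℝ}
    (hp : p ∈ Ps) (h : ∀ q ∈ Ps, ∑ x ∈ A, p x ≤ ∑ x ∈ A, q x) :
    lowProb Ps A = ∑ x ∈ A, p x :=
  IsLeast.csInf_eq ⟨Set.mem_image_of_mem _ hp, Set.forall_mem_image.mpr h⟩

section NestedPossibility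

/-- The possibility distribution equal to `1` on `A`, to `1 - m` on `B \ A` and to `0` off `B`. The
parameter `m` is the guaranteed probability of `A`, not the possibility of `B \ A`. -/
noncomputable def nestedPoss (A B : Finset X) (m : ℝ) (x : X) : ℝ :=
  if x ∈ A then 1 else if x ∈ B then 1 - m else 0

variable [Fintype X] {A B : Finset X} {m α : ℝ}

lemma filter_lt_nestedPoss_subset_inner (hm : m ≤ 1) :
    univ.filter (fun x => 1 - m < nestedPoss A B m x) ⊆ A := by
  intro x hx
  rw [mem_filter_univ, nestedPoss] at hx
  split_ifs at hx <;> first | assumption | linarith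

lemma filter_pos_nestedPoss_subset_outer (hAB : A ⊆ B) :
    univ.filter (fun x => 0 < nestedPoss A B m x) ⊆ B := by
  intro x hx
  rw [mem_filter_univ, nestedPoss] at hx
  split_ifs at hx with hA hB
  exacts [hAB hA, hB, absurd hx (lt_irrefl 0)]

lemma inner_subset_filter_lt_nestedPoss (hα : α < 1) :
    A ⊆ univ.filter (fun x => α < nestedPoss A B m x) := by
  intro x hx
  rwa [mem_filter_univ, nestedPoss, if_pos hx]

lemma outer_subset_filter_lt_nestedPoss (hm : 0 ≤ m) (hα : α < 1 - m) :
    B ⊆ univ.filter (fun x => α < nestedPoss A B m x) := by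
  intro x hx
  rw [mem_filter_univ, nestedPoss]
  split_ifs <;> linarith

lemma mem_credalPoss_nestedPoss {p : X → ℝ} (hm : m ∈ Set.Icc 0 1) (hAB : A ⊆ B) :
    p ∈ credalPoss (nestedPoss A B m) ↔
      IsProbDist p ∧ m ≤ ∑ x ∈ A, p x ∧ 1 ≤ ∑ x ∈ B, p x := by
  obtain ⟨hm₀, hm₁⟩ := hm
  refine and_congr_right fun hp => ⟨fun h => ⟨?_, ?_⟩, fun ⟨hA, hB⟩ α _ hα₁ => ?_⟩
  · calc m = 1 - (1 - m) := (sub_sub_cancel 1 m).symm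
      _ ≤ _ := h (1 - m) (by linarith) (by linarith)
      _ ≤ ∑ x ∈ A, p x := hp.sum_mono (filter_lt_nestedPoss_subset_inner hm₁)
  · calc (1 : ℝ) = 1 - 0 := (sub_zero 1).symm
      _ ≤ _ := h 0 le_rfl zero_le_one
      _ ≤ ∑ x ∈ B, p x := hp.sum_mono (filter_pos_nestedPoss_subset_outer hAB)
  · rcases hα₁.eq_or_lt with rfl | hα₁
    · exact (sub_self (1 : ℝ)).trans_le (hp.sum_nonneg _)
    rcases lt_or_ge α (1 - m) with hα | hα
    · calc 1 - α ≤ ∑ x ∈ B, p x := by linarith [hB]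
        _ ≤ _ := hp.sum_mono (outer_subset_filter_lt_nestedPoss hm₀ hα)
    · calc 1 - α ≤ ∑ x ∈ A, p x := by linarith [hA]
        _ ≤ _ := hp.sum_mono (inner_subset_filter_lt_nestedPoss hα₁)

end NestedPossibility

section PairOfPossibilities

variable [Fintype X] {F₁ F₂ G₁ G₂ : Finset X} {l m : ℝ}

lemma exists_mem_credalPoss_inter_sum_left_eq (hl : l ∈ Set.Icc 0 1)
    (hm : m ∈ Set.Icc 0 1) (hF : F₁ ⊆ F₂) (hG : G₁ ⊆ G₂) (hFG : (F₁ ∩ G₁).Nonempty)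
    (hF₂G₁ : ¬ F₂ ∩ G₁ ⊆ F₁) :
    ∃ p ∈ credalPoss (nestedPoss F₁ F₂ l) ∩ credalPoss (nestedPoss G₁ G₂ m),
      ∑ x ∈ F₁, p x = l := by
  obtain ⟨a, ha⟩ := hFG
  obtain ⟨b, hb, hbF⟩ := not_subset.mp hF₂G₁
  rw [mem_inter] at ha hb
  have hw : ![l, 1 - l] ∈ stdSimplex ℝ (Fin 2) :=
    ⟨by simp [Fin.forall_fin_succ, hl.1, hl.2], by simp⟩
  have hp := isProbDist_pointMasses ![a, b] hw
  refine ⟨_, ⟨(mem_credalPoss_nestedPoss hl hF).mpr ⟨hp, ?_, ?_⟩,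
    (mem_credalPoss_nestedPoss hm hG).mpr ⟨hp, ?_, ?_⟩⟩, ?_⟩ <;>
    simp [sum_pointMasses, ha, hb, hbF, hF ha.1, hG ha.2, hG hb.2, hm.2]

lemma exists_mem_credalPoss_inter_sum_inter_eq (hl : l ∈ Set.Icc 0 1)
    (hm : m ∈ Set.Icc 0 1) (hF : F₁ ⊆ F₂) (hG : G₁ ⊆ G₂) (hFG : (F₁ ∩ G₁).Nonempty)
    (hF₂G₁ : ¬ F₂ ∩ G₁ ⊆ F₁) (hF₁G₂ : ¬ F₁ ∩ G₂ ⊆ G₁) :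
    ∃ p ∈ credalPoss (nestedPoss F₁ F₂ l) ∩ credalPoss (nestedPoss G₁ G₂ m),
      ∑ x ∈ F₁ ∩ G₁, p x = max 0 (l + m - 1) := by
  obtain ⟨a, ha⟩ := hFG
  obtain ⟨b, hb, hbF⟩ := not_subset.mp hF₂G₁
  obtain ⟨c, hc, hcG⟩ := not_subset.mp hF₁G₂
  rw [mem_inter] at ha hb hc
  set k := max 0 (l + m - 1)
  have hk₀ : 0 ≤ k := le_max_left _ _
  have hkl : k ≤ l := max_le hl.1 (by linarith [hm.2])
  have hmk : m ≤ k + (1 - l) := by linarith [le_max_right 0 (l + m - 1)]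
  have hw : ![k, l - k, 1 - l] ∈ stdSimplex ℝ (Fin 3) :=
    ⟨by simp [Fin.forall_fin_succ, hk₀, hkl, hl.2], by simp [Fin.sum_univ_three]⟩
  have hp := isProbDist_pointMasses ![a, c, b] hw
  refine ⟨_, ⟨(mem_credalPoss_nestedPoss hl hF).mpr ⟨hp, ?_, ?_⟩,
    (mem_credalPoss_nestedPoss hm hG).mpr ⟨hp, ?_, ?_⟩⟩, ?_⟩ <;>
    simp [sum_pointMasses, Fin.sum_univ_three, ha, hb, hc, hbF, hcG, hF ha.1, hF hc.1, hG ha.2,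
      hG hb.2, hmk]

lemma exists_mem_credalPoss_inter_sum_union_eq (hl : l ∈ Set.Icc 0 1)
    (hm : m ∈ Set.Icc 0 1) (hF : F₁ ⊆ F₂) (hG : G₁ ⊆ G₂) (hFG : (F₁ ∩ G₁).Nonempty)
    (hF₂G₂ : ¬ F₂ ∩ G₂ ⊆ F₁ ∪ G₁) :
    ∃ p ∈ credalPoss (nestedPoss F₁ F₂ l) ∩ credalPoss (nestedPoss G₁ G₂ m),
      ∑ x ∈ F₁ ∪ G₁, p x = max l m := by
  obtain ⟨a, ha⟩ := hFG
  obtain ⟨d, hd, hdFG⟩ := not_subset.mp hF₂G₂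
  rw [mem_inter] at ha hd
  rw [mem_union, not_or] at hdFG
  have hw : ![max l m, 1 - max l m] ∈ stdSimplex ℝ (Fin 2) :=
    ⟨by simp [Fin.forall_fin_succ, hl.1, hl.2, hm.2], by simp⟩
  have hp := isProbDist_pointMasses ![a, d] hw
  refine ⟨_, ⟨(mem_credalPoss_nestedPoss hl hF).mpr ⟨hp, ?_, ?_⟩,
    (mem_credalPoss_nestedPoss hm hG).mpr ⟨hp, ?_, ?_⟩⟩, ?_⟩ <;>
    simp [sum_pointMasses, ha, hd, hdFG, hF ha.1, hG ha.2]

lemma lowProb_credalPoss_inter_left (hl : l ∈ Set.Icc 0 1)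
    (hm : m ∈ Set.Icc 0 1) (hF : F₁ ⊆ F₂) (hG : G₁ ⊆ G₂) (hFG : (F₁ ∩ G₁).Nonempty)
    (hF₂G₁ : ¬ F₂ ∩ G₁ ⊆ F₁) :
    lowProb (credalPoss (nestedPoss F₁ F₂ l) ∩ credalPoss (nestedPoss G₁ G₂ m)) F₁ = l := by
  obtain ⟨p, hp, hpF⟩ := exists_mem_credalPoss_inter_sum_left_eq hl hm hF hG hFG hF₂G₁
  refine (lowProb_eq_sum_of_forall_le hp fun q hq => ?_).trans hpF
  exact hpF.trans_le ((mem_credalPoss_nestedPoss hl hF).mp hq.1).2.1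

lemma lowProb_credalPoss_inter_right (hl : l ∈ Set.Icc 0 1)
    (hm : m ∈ Set.Icc 0 1) (hF : F₁ ⊆ F₂) (hG : G₁ ⊆ G₂) (hFG : (F₁ ∩ G₁).Nonempty)
    (hF₁G₂ : ¬ F₁ ∩ G₂ ⊆ G₁) :
    lowProb (credalPoss (nestedPoss F₁ F₂ l) ∩ credalPoss (nestedPoss G₁ G₂ m)) G₁ = m := by
  rw [inter_comm] at hFG hF₁G₂
  rw [Set.inter_comm]
  exact lowProb_credalPoss_inter_left hm hl hG hF hFG hF₁G₂

lemma lowProb_credalPoss_inter_inter (hl : l ∈ Set.Icc 0 1)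
    (hm : m ∈ Set.Icc 0 1) (hF : F₁ ⊆ F₂) (hG : G₁ ⊆ G₂) (hFG : (F₁ ∩ G₁).Nonempty)
    (hF₂G₁ : ¬ F₂ ∩ G₁ ⊆ F₁) (hF₁G₂ : ¬ F₁ ∩ G₂ ⊆ G₁) :
    lowProb (credalPoss (nestedPoss F₁ F₂ l) ∩ credalPoss (nestedPoss G₁ G₂ m)) (F₁ ∩ G₁) =
      max 0 (l + m - 1) := by
  obtain ⟨p, hp, hpFG⟩ :=
    exists_mem_credalPoss_inter_sum_inter_eq hl hm hF hG hFG hF₂G₁ hF₁G₂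
  refine (lowProb_eq_sum_of_forall_le hp fun q hq => ?_).trans hpFG
  obtain ⟨hq_prob, hqF, -⟩ := (mem_credalPoss_nestedPoss hl hF).mp hq.1
  obtain ⟨-, hqG, -⟩ := (mem_credalPoss_nestedPoss hm hG).mp hq.2
  have hfrechet := hq_prob.sum_add_sum_sub_one_le_sum_inter F₁ G₁
  exact hpFG.trans_le (max_le (hq_prob.sum_nonneg _) (by linarith))

lemma lowProb_credalPoss_inter_union (hl : l ∈ Set.Icc 0 1)
    (hm : m ∈ Set.Icc 0 1) (hF : F₁ ⊆ F₂) (hG : G₁ ⊆ G₂) (hFG : (F₁ ∩ G₁).Nonempty)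
    (hF₂G₂ : ¬ F₂ ∩ G₂ ⊆ F₁ ∪ G₁) :
    lowProb (credalPoss (nestedPoss F₁ F₂ l) ∩ credalPoss (nestedPoss G₁ G₂ m)) (F₁ ∪ G₁) =
      max l m := by
  obtain ⟨p, hp, hpFG⟩ := exists_mem_credalPoss_inter_sum_union_eq hl hm hF hG hFG hF₂G₂
  refine (lowProb_eq_sum_of_forall_le hp fun q hq => ?_).trans hpFG
  obtain ⟨hq_prob, hqF, -⟩ := (mem_credalPoss_nestedPoss hl hF).mp hq.1
  obtain ⟨-, hqG, -⟩ := (mem_credalPoss_nestedPoss hm hG).mp hq.2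
  exact hpFG.trans_le (max_le (hqF.trans (hq_prob.sum_mono subset_union_left))
    (hqG.trans (hq_prob.sum_mono subset_union_right)))

end PairOfPossibilities

theorem pair_of_possibilities_not_two_monotone_general [Fintype X] {l m : ℝ}
    (hl : l ∈ Set.Ioo 0 1) (hm : m ∈ Set.Ioo 0 1) {F₁ F₂ G₁ G₂ : Finset X}
    (hF : F₁ ⊆ F₂) (hG : G₁ ⊆ G₂) (hFG : (F₁ ∩ G₁).Nonempty) (hF₂G₁ : ¬ F₂ ∩ G₁ ⊆ F₁)
    (hF₁G₂ : ¬ F₁ ∩ G₂ ⊆ G₁) (hF₂G₂ : ¬ F₂ ∩ G₂ ⊆ F₁ ∪ G₁) {Ps : Set (X → ℝ)}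
    (hPs : Ps = credalPoss (nestedPoss F₁ F₂ l) ∩ credalPoss (nestedPoss G₁ G₂ m)) :
    Ps.Nonempty ∧ lowProb Ps F₁ = l ∧ lowProb Ps G₁ = m ∧
      lowProb Ps (F₁ ∩ G₁) = max 0 (l + m - 1) ∧ lowProb Ps (F₁ ∪ G₁) = max l m ∧
      lowProb Ps (F₁ ∪ G₁) + lowProb Ps (F₁ ∩ G₁) < lowProb Ps F₁ + lowProb Ps G₁ := by
  subst hPs
  have hl' := Set.Ioo_subset_Icc_self hl
  have hm' := Set.Ioo_subset_Icc_self hm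
  obtain ⟨p, hp, -⟩ := exists_mem_credalPoss_inter_sum_union_eq hl' hm' hF hG hFG hF₂G₂
  have hleft := lowProb_credalPoss_inter_left hl' hm' hF hG hFG hF₂G₁
  have hright := lowProb_credalPoss_inter_right hl' hm' hF hG hFG hF₁G₂
  have hinter := lowProb_credalPoss_inter_inter hl' hm' hF hG hFG hF₂G₁ hF₁G₂
  have hunion := lowProb_credalPoss_inter_union hl' hm' hF hG hFG hF₂G₂
  refine ⟨⟨p, hp⟩, hleft, hright, hinter, hunion, ?_⟩
  rw [hleft, hright, hinter, hunion]
  have hlt_min : max 0 (l + m - 1) < min l m :=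
    max_lt (lt_min hl.1 hm.1) (lt_min (by linarith [hm.2]) (by linarith [hl.2]))
  calc max l m + max 0 (l + m - 1) < max l m + min l m := by gcongr
    _ = l + m := max_add_min l m

/-- for the two possibility distributions built from nested pairs
`F₁ ⊊ F₂` and `G₁ ⊊ G₂` with masses `λ` and `1 - λ` exchanged, the intersection
of their credal sets is nonempty, and its lower probability takes the values
`λ`, `1 - λ`, `0` on `F₁`, `G₁`, `F₁ ∩ G₁` and is at most `max λ (1 - λ) < 1`
on `F₁ ∪ G₁`; consequently it is not 2-monotone. -/
theorem pair_of_possibilities_not_two_monotone [Fintype X]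
    (lam : ℝ) (hlam0 : 0 < lam) (hlam1 : lam < 1)
    (F₁ F₂ G₁ G₂ : Finset X) (hF : F₁ ⊂ F₂) (hG : G₁ ⊂ G₂)
    (hFG : (F₁ ∩ G₁).Nonempty)
    (h1 : ¬ (F₂ ∩ G₁ ⊆ F₁)) (h2 : ¬ (F₁ ∩ G₂ ⊆ G₁))
    (h3 : ¬ (F₂ ∩ G₂ ⊆ F₁ ∪ G₁))
    (πF πG : X → ℝ)
    (hπF : ∀ x, πF x = if x ∈ F₁ then 1 else if x ∈ F₂ then 1 - lam else 0)
    (hπG : ∀ x, πG x = if x ∈ G₁ then 1 else if x ∈ G₂ then lam else 0) :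
    (credalPoss πF ∩ credalPoss πG).Nonempty ∧
    lowProb (credalPoss πF ∩ credalPoss πG) F₁ = lam ∧
    lowProb (credalPoss πF ∩ credalPoss πG) G₁ = 1 - lam ∧
    lowProb (credalPoss πF ∩ credalPoss πG) (F₁ ∩ G₁) = 0 ∧
    lowProb (credalPoss πF ∩ credalPoss πG) (F₁ ∪ G₁) ≤ max lam (1 - lam) ∧
    max lam (1 - lam) < 1 ∧
    lowProb (credalPoss πF ∩ credalPoss πG) (F₁ ∪ G₁) +
        lowProb (credalPoss πF ∩ credalPoss πG) (F₁ ∩ G₁) <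
      lowProb (credalPoss πF ∩ credalPoss πG) F₁ +
        lowProb (credalPoss πF ∩ credalPoss πG) G₁ := by
  obtain rfl : πF = nestedPoss F₁ F₂ lam := funext hπF
  obtain rfl : πG = nestedPoss G₁ G₂ (1 - lam) := funext fun x => by
    rw [hπG, nestedPoss, sub_sub_cancel]
  obtain ⟨hne, hF₁, hG₁, hinter, hunion, hlt⟩ :=
    pair_of_possibilities_not_two_monotone_general ⟨hlam0, hlam1⟩
      ⟨sub_pos.mpr hlam1, sub_lt_self 1 hlam0⟩ hF.subset hG.subset hFG h1 h2 h3 rfl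
  exact ⟨hne, hF₁, hG₁, by simpa using hinter, hunion.le, max_lt hlam1 (sub_lt_self 1 hlam0), hlt⟩
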